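/- Let φ : ℝ² → ℝ be continuous, convex, positively 1-homogeneous, positive on S¹, and differentiable at every nonzero point. Then for every x in the topological frontier ∂W_φ of the Wulff shape there exists a unit vector ν ∈ S¹ such that ∇φ(ν) = x; i.e. ∂W_φ ⊆ ∇φ(S¹). -/

import Mathlib

/-!
A point `x` of the Wulff shape at which all constraints `⟪x, ν⟫ ≤ φ ν` are strict is an interior
point, because the sphere is compact. So at a frontier point some constraint `⟪x, ν⟫ ≤ φ ν` is an
equality. By homogeneity `⟪x, ·⟫ ≤ φ` holds on the whole space, hence `φ - ⟪x, ·⟫` attains its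
minimum at `ν`, where its derivative `∇φ(ν) - x` must vanish.
-/

open scoped RealInnerProductSpace

/-- The Wulff shape of an anisotropic density `φ` on `ℝ²`:
`W_φ = {x : ⟪x, y⟫ ≤ φ(y) for all unit vectors y}`. -/
def WulffShape (φ : EuclideanSpace ℝ (Fin 2) → ℝ) : Set (EuclideanSpace ℝ (Fin 2)) :=
  {x | ∀ y : EuclideanSpace ℝ (Fin 2), ‖y‖ = 1 → ⟪x, y⟫ ≤ φ y}

section

open Metric Topology

variable {E : Type*} [NormedAddCommGroup E] [InnerProductSpace ℝ E]
  {K : Set E} {φ : E → ℝ} {x ν : E}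

/-- The Wulff shape of `φ` with respect to a set `K` of directions, which need not be unit vectors;
the Wulff shape of a density on `E` is the case `K = sphere 0 1`. -/
def wulffSet (K : Set E) (φ : E → ℝ) : Set E :=
  {x | ∀ y ∈ K, ⟪x, y⟫ ≤ φ y}

theorem wulffShape_eq_wulffSet (φ : EuclideanSpace ℝ (Fin 2) → ℝ) :
    WulffShape φ = wulffSet (sphere 0 1) φ := by
  simp only [WulffShape, wulffSet, mem_sphere_zero_iff_norm]

theorem isClosed_wulffSet (K : Set E) (φ : E → ℝ) : IsClosed (wulffSet K φ) := by
  simp only [wulffSet, Set.ofPred_forall]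
  exact isClosed_biInter fun y _ ↦ isClosed_le (by fun_prop) continuous_const

theorem mem_interior_wulffSet (hK : IsCompact K) (hφ : LowerSemicontinuousOn φ K)
    (hx : ∀ y ∈ K, ⟪x, y⟫ < φ y) : x ∈ interior (wulffSet K φ) := by
  rw [mem_interior_iff_mem_nhds]
  refine hK.eventually_forall_of_forall_eventually (P := fun z y ↦ y ∈ K → ⟪z, y⟫ ≤ φ y)
    (fun y hy ↦ ?_) |>.mono fun z hz y hy ↦ hz y hy hy
  obtain ⟨t, hxt, htφ⟩ := exists_between (hx y hy)
  have inner_lt : ∀ᶠ p : E × E in 𝓝 (x, y), ⟪p.1, p.2⟫ < t :=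
    continuous_inner.continuousAt.eventually_lt_const hxt
  have lt_φ : ∀ᶠ p : E × E in 𝓝 (x, y), p.2 ∈ K → t < φ p.2 :=
    (eventually_nhdsWithin_iff.mp (hφ y hy t htφ)).prod_inr_nhds x
  filter_upwards [inner_lt, lt_φ] with p hpt htp hpK
  exact (hpt.trans (htp hpK)).le

theorem exists_inner_eq_of_mem_frontier_wulffSet (hK : IsCompact K)
    (hφ : LowerSemicontinuousOn φ K) (hx : x ∈ frontier (wulffSet K φ)) :
    ∃ ν ∈ K, ⟪x, ν⟫ = φ ν := by
  have hxW : x ∈ wulffSet K φ := (isClosed_wulffSet K φ).frontier_subset hx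
  by_contra! hne
  exact hx.2 (mem_interior_wulffSet hK hφ fun y hy ↦ (hxW y hy).lt_of_ne (hne y hy))

theorem inner_le_of_mem_wulffSet_sphere (hhom : ∀ c : ℝ, 0 < c → ∀ y, φ (c • y) = c * φ y)
    (hx : x ∈ wulffSet (sphere 0 1) φ) (y : E) : ⟪x, y⟫ ≤ φ y := by
  rcases eq_or_ne y 0 with rfl | hy
  · have hφ₀ : φ 0 = 2 * φ 0 := by simpa only [smul_zero] using hhom 2 two_pos 0
    rw [inner_zero_right]
    linarith
  · have hunit : ‖y‖⁻¹ • y ∈ sphere (0 : E) 1 :=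
      mem_sphere_zero_iff_norm.mpr (norm_smul_inv_norm (𝕜 := ℝ) hy)
    have hinv : 0 < ‖y‖⁻¹ := inv_pos.mpr (norm_pos_iff.mpr hy)
    refine le_of_mul_le_mul_left ?_ hinv
    rw [← hhom _ hinv, ← real_inner_smul_right]
    exact hx _ hunit

theorem gradient_eq_of_eventually_inner_le [CompleteSpace E] (hφ : DifferentiableAt ℝ φ ν)
    (hle : ∀ᶠ y in 𝓝 ν, ⟪x, y⟫ ≤ φ y) (heq : ⟪x, ν⟫ = φ ν) : gradient φ ν = x := by
  have hmin : IsLocalMin (fun y ↦ φ y - ⟪x, y⟫) ν := by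
    filter_upwards [hle] with y hy
    rwa [heq, sub_self, sub_nonneg]
  have hderiv : fderiv ℝ φ ν = innerSL ℝ x :=
    sub_eq_zero.mp (hmin.hasFDerivAt_eq_zero (hφ.hasFDerivAt.sub (innerSL ℝ x).hasFDerivAt))
  exact (InnerProductSpace.toDual ℝ E).injective (toDual_gradient.trans hderiv)

theorem frontier_wulffShape_subset_gradient_image_general [FiniteDimensional ℝ E]
    (hhom : ∀ c : ℝ, 0 < c → ∀ y, φ (c • y) = c * φ y)
    (hdiff : ∀ y ∈ sphere (0 : E) 1, DifferentiableAt ℝ φ y) :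
    frontier (wulffSet (sphere 0 1) φ) ⊆ gradient φ '' sphere 0 1 := by
  intro x hx
  have hlsc : LowerSemicontinuousOn φ (sphere 0 1) :=
    ContinuousOn.lowerSemicontinuousOn fun y hy ↦ (hdiff y hy).continuousAt.continuousWithinAt
  obtain ⟨ν, hν, heq⟩ := exists_inner_eq_of_mem_frontier_wulffSet (isCompact_sphere 0 1) hlsc hx
  have hle : ∀ y, ⟪x, y⟫ ≤ φ y :=
    inner_le_of_mem_wulffSet_sphere hhom ((isClosed_wulffSet _ φ).frontier_subset hx)
  exact ⟨ν, hν, gradient_eq_of_eventually_inner_le (hdiff ν hν) (.of_forall hle) heq⟩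

end

/-- If `φ : ℝ² → ℝ` is continuous, convex, positively 1-homogeneous, positive on the unit
sphere and differentiable away from `0`, then every point of the frontier of the Wulff shape
is the gradient of `φ` at some unit vector: `∂W_φ ⊆ ∇φ(S¹)`. -/
theorem frontier_wulffShape_subset_gradient_image
    (φ : EuclideanSpace ℝ (Fin 2) → ℝ)
    (hcont : Continuous φ)
    (hconv : ConvexOn ℝ Set.univ φ)
    (hhom : ∀ c : ℝ, 0 < c → ∀ x : EuclideanSpace ℝ (Fin 2), φ (c • x) = c * φ x)
    (hpos : ∀ y : EuclideanSpace ℝ (Fin 2), ‖y‖ = 1 → 0 < φ y)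
    (hdiff : ∀ x : EuclideanSpace ℝ (Fin 2), x ≠ 0 → DifferentiableAt ℝ φ x) :
    ∀ x ∈ frontier (WulffShape φ),
      ∃ ν : EuclideanSpace ℝ (Fin 2), ‖ν‖ = 1 ∧ gradient φ ν = x := by
  simpa only [wulffShape_eq_wulffSet, Set.subset_def, Set.mem_image, mem_sphere_zero_iff_norm] using
    frontier_wulffShape_subset_gradient_image_general hhom
      fun y hy ↦ hdiff y (Metric.ne_of_mem_sphere hy one_ne_zero)
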